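/- Let T₀ be a trace class operator on ℓ²(ℕ) whose (1,1) matrix entry vanishes (⟨T₀e_1, e_1⟩ = 0), let β ∈ ℂ, and define the linear functional ω on S₀ by ω(λI + K) = βλ + Σ_{(i,j)≠(1,1)} t_{i,j} k_{i,j} for λ ∈ ℂ and K ∈ K₀ (where t_{i,j} = ⟨T₀e_j, e_i⟩ and k_{i,j} = ⟨Ke_j, e_i⟩). Then ω is a positive functional on S₀ (nonnegative on positive elements of S₀) if and only if there exists α ≥ 0 such that T₀ + αE_{1,1} is a positive operator and β ≥ tr(T₀) + α. -/

import Mathlib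

noncomputable section

open scoped ComplexOrder InnerProductSpace

/-- The Hilbert space ℓ²(ℕ) of square-summable complex sequences. -/
abbrev Hs : Type := lp (fun _ : ℕ => ℂ) 2

/-- The standard orthonormal basis vectors of ℓ²(ℕ) (indexed from 0). -/
def e (i : ℕ) : Hs := lp.single 2 i 1

/-- The matrix unit `E i j : x ↦ ⟨x, e j⟩ e i`. -/
def E (i j : ℕ) : Hs →L[ℂ] Hs := (innerSL ℂ (e j)).smulRight (e i)

/-- `K₀`: the norm-closed linear span of the matrix units `E i j`, `(i,j) ≠ (0,0)`. -/
def K0 : Submodule ℂ (Hs →L[ℂ] Hs) :=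
  (Submodule.span ℂ {T | ∃ i j : ℕ, (i, j) ≠ (0, 0) ∧ T = E i j}).topologicalClosure

/-- The operator system `S₀` spanned by `K₀` and the identity operator. -/
def S0 : Submodule ℂ (Hs →L[ℂ] Hs) := Submodule.span ℂ {(1 : Hs →L[ℂ] Hs)} ⊔ K0

lemma one_mem_S0 : (1 : Hs →L[ℂ] Hs) ∈ S0 :=
  Submodule.mem_sup_left (Submodule.mem_span_singleton_self _)

/-- The matrix entry `X_{ij} = ⟨X e_j, e_i⟩` of a bounded operator on ℓ²(ℕ). -/
def entry (X : Hs →L[ℂ] Hs) (i j : ℕ) : ℂ := ⟪e i, X (e j)⟫_ℂ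

/-- `φ_{n+1}(X) = V_{n+1}* X V_{n+1}`, the upper-left (n+1)×(n+1) corner of `X`. -/
def phi (n : ℕ) (X : Hs →L[ℂ] Hs) : Matrix (Fin (n+1)) (Fin (n+1)) ℂ :=
  fun i j => entry X i j

/-- `Q_{n+1}`: the projection onto the orthocomplement of the span of `e 0, …, e n`. -/
def Qop (n : ℕ) : Hs →L[ℂ] Hs := 1 - ∑ i : Fin (n+1), E i i

/-- `ψ_{n+1}(Y) = V_{n+1} Y V_{n+1}* + y₀₀ Q_{n+1}`. -/
def psi (n : ℕ) (Y : Matrix (Fin (n+1)) (Fin (n+1)) ℂ) : Hs →L[ℂ] Hs :=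
  (∑ i : Fin (n+1), ∑ j : Fin (n+1), Y i j • E i j) + Y 0 0 • Qop n

/-- Positivity in the C*-algebra of m×m matrices over a star ring: `M = N* N`. -/
def MatPos {A : Type*} [Ring A] [StarRing A] {m : ℕ}
    (M : Matrix (Fin m) (Fin m) A) : Prop :=
  ∃ N : Matrix (Fin m) (Fin m) A, M = N.conjTranspose * N

/-- Complete positivity of a map between star rings: every matrix amplification
preserves positivity. -/
def IsCPfun {A B : Type*} [Ring A] [StarRing A] [Ring B] [StarRing B]
    (θ : A → B) : Prop :=
  ∀ (m : ℕ) (M : Matrix (Fin m) (Fin m) A), MatPos M → MatPos (M.map θ)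
set_option synthInstance.maxHeartbeats 1000000

/-- The absolute value `|T| = √(T*T)` of a bounded operator on ℓ²(ℕ). -/
def absOp (T : Hs →L[ℂ] Hs) : Hs →L[ℂ] Hs :=
  haveI : NonUnitalContinuousFunctionalCalculus ℝ (Hs →L[ℂ] Hs) IsSelfAdjoint :=
    IsSelfAdjoint.instNonUnitalContinuousFunctionalCalculus
  CFC.sqrt (star T * T)

/-- `T` is trace class: `T` is compact and `Σᵢ ⟨|T|eᵢ, eᵢ⟩ < ∞`. -/
def TraceClass (T : Hs →L[ℂ] Hs) : Prop :=
  IsCompactOperator ⇑T ∧ Summable (fun i : ℕ => (⟪e i, absOp T (e i)⟫_ℂ).re)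

/-- The trace `tr(T) = Σᵢ ⟨T eᵢ, eᵢ⟩` of a (trace class) operator. -/
def traceOp (T : Hs →L[ℂ] Hs) : ℂ := ∑' i : ℕ, entry T i i

/-!
Put `T_n = T + (β - Σ_{i ≤ n} t_{ii}) E₀₀`. As `ψ_{n+1}(Y) - y₀₀ I` lies in `K₀` and has finite
rank, `ω (ψ_{n+1}(Y)) = tr (φ_{n+1}(T_n) Yᵀ)` for every matrix `Y`. Since `ψ_{n+1}` preserves
positivity and the cone of positive semidefinite matrices is self-dual for `tr (A Yᵀ)`, positivity
of `ω` forces every corner `φ_{n+1}(T_n)` to be positive semidefinite. Conversely, the square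
partial sums of `ω(λI + K)` are `tr (φ_{n+1}(T_n) φ_{n+1}(λI + K)ᵀ)`, so positive semidefinite
corners make `ω` positive.

The `(0,0)` entry of `T_n` bounds the partial traces of `T` by `β`, and `T_n` converges to
`T + α E₀₀` with `α = β - tr T`, the largest admissible `α`.
-/

open Filter InnerProductSpace Topology
open scoped Matrix

section PositiveSemidefinite

variable {𝕜 H ι : Type*} [RCLike 𝕜] [NormedAddCommGroup H] [InnerProductSpace 𝕜 H]

lemma sum_star_mul_inner_apply_mul (T : H →L[𝕜] H) (v : ι → H) (s : Finset ι) (x y : ι → 𝕜) :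
    ∑ i ∈ s, ∑ j ∈ s, star (x i) * ⟪v i, T (v j)⟫_𝕜 * y j =
      ⟪∑ i ∈ s, x i • v i, T (∑ j ∈ s, y j • v j)⟫_𝕜 := by
  simp only [map_sum, map_smul, sum_inner, inner_sum, inner_smul_left, inner_smul_right,
    RCLike.star_def, Finset.mul_sum]
  rw [Finset.sum_comm]
  exact Finset.sum_congr rfl fun i _ => Finset.sum_congr rfl fun j _ => by ring

lemma posSemidef_of_inner_apply {T : H →L[𝕜] H} (hT : T.IsPositive) (v : ι → H) :
    (Matrix.of fun i j => ⟪v i, T (v j)⟫_𝕜).PosSemidef := by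
  refine ⟨?_, fun x => ?_⟩
  · ext i j
    simpa using hT.isSymmetric (v i) (v j)
  · exact (hT.inner_nonneg_right _).trans_eq (sum_star_mul_inner_apply_mul T v x.support x x).symm

lemma isPositive_sum_smul_rankOne [Fintype ι] {Y : Matrix ι ι 𝕜} (hY : Y.PosSemidef)
    (v : ι → H) :
    (∑ i, ∑ j, Y i j • rankOne 𝕜 (v i) (v j)).IsPositive := by
  obtain ⟨m, a, rfl⟩ := Matrix.posSemidef_iff_eq_sum_vecMulVec.mp hY
  have sum_eq : ∑ i, ∑ j, (∑ k, Matrix.vecMulVec (a k) (star (a k))) i j • rankOne 𝕜 (v i) (v j) =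
      ∑ k, rankOne 𝕜 (∑ i, a k i • v i) (∑ i, a k i • v i) := by
    simp only [Matrix.sum_apply, Matrix.vecMulVec_apply, Finset.sum_smul]
    rw [Finset.sum_congr rfl fun i _ => Finset.sum_comm, Finset.sum_comm]
    refine Finset.sum_congr rfl fun k _ => ?_
    rw [Finset.sum_comm]
    simp [map_sum, sum_apply, smul_smul]
  rw [sum_eq]
  exact ContinuousLinearMap.isPositive_sum _ fun k _ => isPositive_rankOne_self _

lemma isPositive_one_sub_sum_rankOne {v : ι → H} (hv : Orthonormal 𝕜 v) (s : Finset ι) :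
    (1 - ∑ i ∈ s, rankOne 𝕜 (v i) (v i)).IsPositive := by
  refine (ContinuousLinearMap.isPositive_iff _).mpr ⟨?_, fun x => ?_⟩
  · exact ContinuousLinearMap.isPositive_one.isSymmetric.sub
      (ContinuousLinearMap.isPositive_sum s fun i _ => isPositive_rankOne_self (v i)).isSymmetric
  · have inner_eq : ⟪(1 - ∑ i ∈ s, rankOne 𝕜 (v i) (v i)) x, x⟫_𝕜 =
        ((‖x‖ ^ 2 - ∑ i ∈ s, ‖⟪v i, x⟫_𝕜‖ ^ 2 : ℝ) : 𝕜) := by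
      simp only [sub_apply, one_apply_eq_self, sum_apply, rankOne_apply, inner_sub_left, sum_inner,
        inner_smul_left, RCLike.conj_mul, inner_self_eq_norm_sq_to_K]
      push_cast
      rfl
    rw [inner_eq, RCLike.ofReal_nonneg, sub_nonneg]
    exact hv.sum_inner_products_le x

lemma isPositive_of_forall_inner_nonneg {H : Type*} [NormedAddCommGroup H] [InnerProductSpace ℂ H]
    {T : H →ₗ[ℂ] H} (h : ∀ x, 0 ≤ ⟪x, T x⟫_ℂ) : T.IsPositive := by
  refine T.isPositive_iff_complex.mpr fun x => ?_
  have inner_nonneg : 0 ≤ ⟪T x, x⟫_ℂ := by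
    rw [← inner_conj_symm]
    exact star_nonneg_iff.mpr (h x)
  obtain ⟨r, r_nonneg, hr⟩ := RCLike.nonneg_iff_exists_ofReal.mp inner_nonneg
  rw [← hr]
  exact ⟨by simp, by simpa using r_nonneg⟩

lemma posSemidef_iff_forall_trace_mul_transpose_nonneg [Fintype ι] {A : Matrix ι ι ℂ} :
    A.PosSemidef ↔ ∀ Y : Matrix ι ι ℂ, Y.PosSemidef → 0 ≤ (A * Yᵀ).trace := by
  classical
  refine ⟨fun hA Y hY => ?_, fun hA => ?_⟩
  · rw [← Matrix.sum_hadamard_eq]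
    simpa [dotProduct, Matrix.mulVec] using
      (hA.hadamard hY).dotProduct_mulVec_nonneg fun _ => 1
  · rw [← Matrix.isPositive_toEuclideanLin_iff]
    refine isPositive_of_forall_inner_nonneg fun x => ?_
    have hx := hA _ (Matrix.posSemidef_vecMulVec_star_self x.ofLp)
    rw [Matrix.transpose_vecMulVec, Matrix.mul_vecMulVec, Matrix.trace_vecMulVec] at hx
    simpa [EuclideanSpace.inner_eq_star_dotProduct] using hx

end PositiveSemidefinite

section MatrixEntries

lemma E_eq_rankOne (i j : ℕ) : E i j = rankOne ℂ (e i) (e j) := rfl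

lemma inner_e_left (i : ℕ) (x : Hs) : ⟪e i, x⟫_ℂ = x i := by
  simp [e, lp.inner_single_left]

lemma orthonormal_e : Orthonormal ℂ e := by
  refine orthonormal_iff_ite.mpr fun i j => ?_
  rw [inner_e_left, e, lp.single_apply, Pi.single_apply]

lemma hasSum_smul_e (x : Hs) : HasSum (fun i => x i • e i) x := by
  simpa [e, ← lp.single_smul] using lp.hasSum_single (p := 2) (by simp) x

lemma entry_add (X Y : Hs →L[ℂ] Hs) (i j : ℕ) :
    entry (X + Y) i j = entry X i j + entry Y i j := by
  simp [entry]

lemma entry_smul (c : ℂ) (X : Hs →L[ℂ] Hs) (i j : ℕ) : entry (c • X) i j = c * entry X i j := by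
  simp [entry]

lemma entry_one (i j : ℕ) : entry 1 i j = if i = j then 1 else 0 :=
  orthonormal_iff_ite.mp orthonormal_e i j

lemma entry_E (a b i j : ℕ) : entry (E a b) i j = if i = a ∧ j = b then 1 else 0 := by
  simp only [entry, E_eq_rankOne, rankOne_apply, inner_smul_right,
    orthonormal_iff_ite.mp orthonormal_e]
  grind

lemma entry_sum_smul_E {n : ℕ} (Z : Matrix (Fin n) (Fin n) ℂ) (i j : ℕ) :
    entry (∑ a, ∑ b, Z a b • E a b) i j =
      ∑ a : Fin n, ∑ b : Fin n, if i = a ∧ j = b then Z a b else 0 := by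
  have entry_sum : entry (∑ a, ∑ b, Z a b • E a b) i j = ∑ a, ∑ b, Z a b * entry (E a b) i j := by
    simp [entry, sum_apply]
  simp [entry_sum, entry_E]

lemma entry_zero_zero_of_mem_K0 {K : Hs →L[ℂ] Hs} (hK : K ∈ K0) : entry K 0 0 = 0 := by
  let entryCLM : (Hs →L[ℂ] Hs) →L[ℂ] ℂ := innerSL ℂ (e 0) ∘L ContinuousLinearMap.apply ℂ Hs (e 0)
  suffices K0 ≤ entryCLM.ker from this hK
  refine Submodule.topologicalClosure_minimal _ (Submodule.span_le.mpr ?_) entryCLM.isClosed_ker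
  rintro _ ⟨i, j, hij, rfl⟩
  have entry_eq_zero : entry (E i j) 0 0 = 0 := by
    rw [entry_E, if_neg]
    rintro ⟨rfl, rfl⟩
    exact hij rfl
  exact entry_eq_zero

lemma E_mem_K0 {i j : ℕ} (hij : (i, j) ≠ (0, 0)) : E i j ∈ K0 :=
  Submodule.le_topologicalClosure _ (Submodule.subset_span ⟨i, j, hij, rfl⟩)

end MatrixEntries

section Corners

lemma phi_add (n : ℕ) (X Y : Hs →L[ℂ] Hs) : phi n (X + Y) = phi n X + phi n Y := by
  ext i j
  exact entry_add X Y i j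

lemma phi_smul (n : ℕ) (c : ℂ) (X : Hs →L[ℂ] Hs) : phi n (c • X) = c • phi n X := by
  ext i j
  exact entry_smul c X i j

lemma phi_one (n : ℕ) : phi n 1 = 1 := by
  ext i j
  simp [phi, entry_one, Matrix.one_apply, Fin.ext_iff]

lemma phi_E_zero_zero (n : ℕ) : phi n (E 0 0) = Matrix.single 0 0 1 := by
  ext i j
  simp [phi, entry_E, Matrix.single_apply, eq_comm (a := i), eq_comm (a := j)]

lemma trace_phi (n : ℕ) (T : Hs →L[ℂ] Hs) :
    (phi n T).trace = ∑ i ∈ Finset.range (n + 1), entry T i i :=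
  (Finset.sum_range fun i => entry T i i).symm

lemma trace_phi_mul_transpose (n : ℕ) (T X : Hs →L[ℂ] Hs) :
    (phi n T * (phi n X)ᵀ).trace =
      ∑ p ∈ Finset.range (n + 1) ×ˢ Finset.range (n + 1), entry T p.1 p.2 * entry X p.1 p.2 := by
  rw [← Matrix.sum_hadamard_eq, Finset.sum_product]
  simp only [Finset.sum_range]
  rfl

lemma phi_posSemidef {T : Hs →L[ℂ] Hs} (hT : T.IsPositive) (n : ℕ) : (phi n T).PosSemidef :=
  posSemidef_of_inner_apply hT fun i : Fin (n + 1) => e i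

lemma isPositive_of_tendsto_of_phi_posSemidef {T : ℕ → Hs →L[ℂ] Hs} {S : Hs →L[ℂ] Hs}
    (hTS : Tendsto T atTop (𝓝 S)) (hT : ∀ n, (phi n (T n)).PosSemidef) : S.IsPositive := by
  rw [← ContinuousLinearMap.isPositive_toLinearMap_iff]
  refine isPositive_of_forall_inner_nonneg fun x => ?_
  let truncation (n : ℕ) : Hs := ∑ i ∈ Finset.range (n + 1), x i • e i
  have tendsto_truncation : Tendsto truncation atTop (𝓝 x) :=
    (hasSum_smul_e x).tendsto_sum_nat.comp (tendsto_add_atTop_nat 1)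
  have inner_truncation_nonneg (n : ℕ) : 0 ≤ ⟪truncation n, T n (truncation n)⟫_ℂ := by
    have sum_nonneg := (hT n).dotProduct_mulVec_nonneg fun i => x i
    simp only [dotProduct, Matrix.mulVec, Finset.mul_sum, ← mul_assoc, Pi.star_apply] at sum_nonneg
    rw [← sum_star_mul_inner_apply_mul]
    simpa only [Finset.sum_range, phi, entry] using sum_nonneg
  have tendsto_apply : Tendsto (fun n => T n (truncation n)) atTop (𝓝 (S x)) :=
    isBoundedBilinearMap_apply.continuous.continuousAt.tendsto.comp
      (hTS.prodMk_nhds tendsto_truncation)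
  exact ge_of_tendsto' (tendsto_truncation.inner tendsto_apply) inner_truncation_nonneg

lemma Qop_isPositive (n : ℕ) : (Qop n).IsPositive :=
  isPositive_one_sub_sum_rankOne (orthonormal_e.comp _ Fin.val_injective) Finset.univ

lemma psi_isPositive {n : ℕ} {Y : Matrix (Fin (n + 1)) (Fin (n + 1)) ℂ} (hY : Y.PosSemidef) :
    (psi n Y).IsPositive :=
  (isPositive_sum_smul_rankOne hY fun i : Fin (n + 1) => e i).add
    ((Qop_isPositive n).smul_of_nonneg hY.diag_nonneg)

variable {n : ℕ} (Y : Matrix (Fin (n + 1)) (Fin (n + 1)) ℂ)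

lemma psi_sub_smul_one :
    psi n Y - Y 0 0 • 1 = ∑ i : Fin (n + 1), ∑ j : Fin (n + 1), (Y - Y 0 0 • 1) i j • E i j := by
  have sum_diagonal : ∑ i : Fin (n + 1), ∑ j : Fin (n + 1),
      (Y 0 0 • (1 : Matrix (Fin (n + 1)) (Fin (n + 1)) ℂ)) i j • E i j =
        Y 0 0 • ∑ i : Fin (n + 1), E i i := by
    simp [Matrix.one_apply, Finset.smul_sum]
  simp only [Matrix.sub_apply, sub_smul, Finset.sum_sub_distrib, sum_diagonal]
  rw [psi, Qop, smul_sub]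
  abel

lemma psi_sub_smul_one_mem_K0 : psi n Y - Y 0 0 • 1 ∈ K0 := by
  rw [psi_sub_smul_one]
  refine Submodule.sum_mem _ fun i _ => Submodule.sum_mem _ fun j _ => ?_
  by_cases hij : ((i : ℕ), (j : ℕ)) = (0, 0)
  · obtain ⟨rfl, rfl⟩ : i = 0 ∧ j = 0 := by simpa using hij
    simp
  · exact Submodule.smul_mem _ _ (E_mem_K0 hij)

lemma phi_psi : phi n (psi n Y) = Y := by
  rw [← sub_add_cancel (psi n Y) (Y 0 0 • 1), phi_add, phi_smul, phi_one, psi_sub_smul_one]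
  ext i j
  rw [Matrix.add_apply, phi, entry_sum_smul_E (Y - Y 0 0 • 1)]
  simp [Fin.val_inj, ite_and]

lemma entry_psi_sub_smul_one_eq_zero {p : ℕ × ℕ}
    (hp : p ∉ Finset.range (n + 1) ×ˢ Finset.range (n + 1)) :
    entry (psi n Y - Y 0 0 • 1) p.1 p.2 = 0 := by
  rw [psi_sub_smul_one, entry_sum_smul_E (Y - Y 0 0 • 1)]
  refine Finset.sum_eq_zero fun a _ => Finset.sum_eq_zero fun b _ => if_neg ?_
  rintro ⟨ha, hb⟩
  exact hp (by simp [ha, hb, Fin.is_le])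

end Corners

lemma tendsto_range_succ_product_atTop :
    Tendsto (fun n : ℕ => Finset.range (n + 1) ×ˢ Finset.range (n + 1)) atTop atTop := by
  have tendsto_range_succ := tendsto_finset_range.comp (tendsto_add_atTop_nat 1)
  have tendsto_pair := tendsto_range_succ.prodMk tendsto_range_succ
  rw [prod_atTop_atTop_eq] at tendsto_pair
  exact tendsto_finsetProd_atTop.comp tendsto_pair

lemma add_tsum_nonneg_of_tendsto {ι M : Type*} [AddCommMonoid M] [Preorder M] [TopologicalSpace M]
    [ContinuousAdd M] [OrderClosedTopology M] {f : ι → M} {c : M} {s : ℕ → Finset ι}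
    (hs : Tendsto s atTop atTop) (hc : 0 ≤ c) (hf : ∀ n, 0 ≤ c + ∑ i ∈ s n, f i) :
    0 ≤ c + ∑' i, f i := by
  by_cases hsum : Summable f
  · exact ge_of_tendsto' ((hsum.hasSum.comp hs).const_add c) hf
  · rwa [tsum_eq_zero_of_not_summable hsum, add_zero]

lemma summable_of_nonneg_of_sum_range_le {f : ℕ → ℂ} {c : ℂ} (hf : ∀ i, 0 ≤ f i)
    (hc : ∀ n, ∑ i ∈ Finset.range n, f i ≤ c) : Summable f := by
  choose g g_nonneg hg using fun i => RCLike.nonneg_iff_exists_ofReal.mp (hf i)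
  obtain rfl : (fun i => (g i : ℂ)) = f := funext hg
  refine Complex.ofRealCLM.summable (summable_of_sum_range_le (c := c.re) g_nonneg fun n => ?_)
  simpa using (Complex.le_def.mp (hc n)).1

section Functional

/-- The value `ω(λI + K) = βλ + Σ_{(i,j)≠(0,0)} t_{ij} k_{ij}` of the functional on `S₀` given by
`T` and `β`. Over a compact `K` the double series need not converge unconditionally, in which case
`tsum` contributes `0`. -/
def omegaFunctional (T : Hs →L[ℂ] Hs) (β lam : ℂ) (K : Hs →L[ℂ] Hs) : ℂ :=
  β * lam + ∑' p : ℕ × ℕ, if p = (0, 0) then 0 else entry T p.1 p.2 * entry K p.1 p.2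

/-- The operator `T + (β - Σ_{i ≤ n} t_{ii}) E₀₀`, whose corner `φ_{n+1}` is the density matrix of
the functional `ω ∘ ψ_{n+1}` on matrices, with respect to the pairing `tr (A Yᵀ)`. -/
def cornerDensity (T : Hs →L[ℂ] Hs) (β : ℂ) (n : ℕ) : Hs →L[ℂ] Hs :=
  T + (β - (phi n T).trace) • E 0 0

variable {T K : Hs →L[ℂ] Hs} {β : ℂ}

lemma omegaFunctional_eq_of_mem_K0 (hK : K ∈ K0) (lam : ℂ) :
    omegaFunctional T β lam K = β * lam + ∑' p : ℕ × ℕ, entry T p.1 p.2 * entry K p.1 p.2 := by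
  rw [omegaFunctional]
  congr 2 with p
  split_ifs with hp
  · simp [hp, entry_zero_zero_of_mem_K0 hK]
  · rfl

lemma trace_phi_cornerDensity_mul_transpose (hK : K ∈ K0) (lam : ℂ) (n : ℕ) :
    (phi n (cornerDensity T β n) * (phi n (lam • 1 + K))ᵀ).trace =
      β * lam + (phi n T * (phi n K)ᵀ).trace := by
  have phi_K_zero_zero : phi n K 0 0 = 0 := entry_zero_zero_of_mem_K0 hK
  simp only [cornerDensity, phi_add, phi_smul, phi_one, phi_E_zero_zero, Matrix.transpose_add,
    Matrix.transpose_smul, Matrix.transpose_one, add_mul, mul_add, Matrix.trace_add, mul_one,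
    Matrix.trace_smul, Matrix.mul_smul, Matrix.smul_mul, Matrix.trace_single_mul, smul_eq_mul,
    Matrix.transpose_apply, phi_K_zero_zero, Matrix.trace_single_eq_same]
  ring

lemma trace_phi_cornerDensity_mul_transpose_eq_omegaFunctional {n : ℕ}
    (Y : Matrix (Fin (n + 1)) (Fin (n + 1)) ℂ) :
    (phi n (cornerDensity T β n) * Yᵀ).trace =
      omegaFunctional T β (Y 0 0) (psi n Y - Y 0 0 • 1) := by
  have hK := psi_sub_smul_one_mem_K0 Y
  conv_lhs => rw [← phi_psi Y, ← add_sub_cancel (Y 0 0 • 1) (psi n Y)]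
  rw [trace_phi_cornerDensity_mul_transpose hK, omegaFunctional_eq_of_mem_K0 hK,
    trace_phi_mul_transpose,
    tsum_eq_sum fun p hp => by rw [entry_psi_sub_smul_one_eq_zero Y hp, mul_zero]]

lemma omegaFunctional_nonneg_of_forall_phi_cornerDensity_posSemidef
    (hT : ∀ n, (phi n (cornerDensity T β n)).PosSemidef) {lam : ℂ} (hK : K ∈ K0)
    (hX : (lam • 1 + K).IsPositive) : 0 ≤ omegaFunctional T β lam K := by
  have partialSum_nonneg (n : ℕ) : 0 ≤ β * lam +
      ∑ p ∈ Finset.range (n + 1) ×ˢ Finset.range (n + 1), entry T p.1 p.2 * entry K p.1 p.2 := by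
    rw [← trace_phi_mul_transpose, ← trace_phi_cornerDensity_mul_transpose hK]
    exact posSemidef_iff_forall_trace_mul_transpose_nonneg.mp (hT n) _ (phi_posSemidef hX n)
  rw [omegaFunctional_eq_of_mem_K0 hK]
  -- If the series diverges, `tsum` leaves `β * lam`, which is the partial sum over `{(0, 0)}`.
  refine add_tsum_nonneg_of_tendsto tendsto_range_succ_product_atTop ?_ partialSum_nonneg
  simpa [entry_zero_zero_of_mem_K0 hK] using partialSum_nonneg 0

lemma omegaFunctional_nonneg_iff_forall_phi_cornerDensity_posSemidef :
    (∀ (lam : ℂ) (K : Hs →L[ℂ] Hs), K ∈ K0 → (lam • (1 : Hs →L[ℂ] Hs) + K).IsPositive →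
        0 ≤ omegaFunctional T β lam K) ↔
      ∀ n, (phi n (cornerDensity T β n)).PosSemidef := by
  refine ⟨fun hω n => ?_, fun hT lam K hK hX =>
    omegaFunctional_nonneg_of_forall_phi_cornerDensity_posSemidef hT hK hX⟩
  refine posSemidef_iff_forall_trace_mul_transpose_nonneg.mpr fun Y hY => ?_
  rw [trace_phi_cornerDensity_mul_transpose_eq_omegaFunctional]
  refine hω _ _ (psi_sub_smul_one_mem_K0 Y) ?_
  rw [add_sub_cancel]
  exact psi_isPositive hY

lemma isPositive_E_zero_zero : (E 0 0).IsPositive := isPositive_rankOne_self (e 0)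

lemma phi_cornerDensity_posSemidef_of_isPositive {α : ℝ}
    (hT : (T + (α : ℂ) • E 0 0).IsPositive) {n : ℕ} (hβ : (phi n T).trace + α ≤ β) :
    (phi n (cornerDensity T β n)).PosSemidef := by
  have cornerDensity_eq : cornerDensity T β n =
      (T + (α : ℂ) • E 0 0) + (β - ((phi n T).trace + α)) • E 0 0 := by
    rw [cornerDensity]
    module
  rw [cornerDensity_eq]
  exact phi_posSemidef (hT.add (isPositive_E_zero_zero.smul_of_nonneg (sub_nonneg.mpr hβ))) n

lemma entry_self_nonneg_of_phi_add_smul_E_posSemidef (h00 : entry T 0 0 = 0) {c : ℂ} {n : ℕ}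
    (hT : (phi n (T + c • E 0 0)).PosSemidef) : 0 ≤ entry T n n := by
  rcases eq_or_ne n 0 with rfl | n_ne_zero
  · exact h00.ge
  · have diag_nonneg : 0 ≤ entry (T + c • E 0 0) n n := by
      simpa [phi] using hT.diag_nonneg (i := Fin.last n)
    simpa [entry_add, entry_smul, entry_E, n_ne_zero] using diag_nonneg

lemma trace_phi_le_of_phi_cornerDensity_posSemidef (h00 : entry T 0 0 = 0) {n : ℕ}
    (hT : (phi n (cornerDensity T β n)).PosSemidef) : (phi n T).trace ≤ β := by
  have h : 0 ≤ entry (cornerDensity T β n) 0 0 := hT.diag_nonneg (i := 0)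
  simpa [cornerDensity, entry_add, entry_smul, entry_E, h00] using h

lemma summable_entry_self_of_forall_phi_cornerDensity_posSemidef (h00 : entry T 0 0 = 0)
    (hT : ∀ n, (phi n (cornerDensity T β n)).PosSemidef) : Summable fun i => entry T i i := by
  have entry_nonneg (i : ℕ) : 0 ≤ entry T i i :=
    entry_self_nonneg_of_phi_add_smul_E_posSemidef h00 (hT i)
  refine summable_of_nonneg_of_sum_range_le entry_nonneg (c := β) fun n => ?_
  calc ∑ i ∈ Finset.range n, entry T i i
      ≤ ∑ i ∈ Finset.range (n + 1), entry T i i := by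
        rw [Finset.sum_range_succ]
        exact le_add_of_nonneg_right (entry_nonneg n)
    _ = (phi n T).trace := (trace_phi n T).symm
    _ ≤ β := trace_phi_le_of_phi_cornerDensity_posSemidef h00 (hT n)

lemma tendsto_trace_phi (hT : Summable fun i => entry T i i) :
    Tendsto (fun n => (phi n T).trace) atTop (𝓝 (traceOp T)) := by
  simp only [trace_phi]
  exact hT.hasSum.tendsto_sum_nat.comp (tendsto_add_atTop_nat 1)

theorem forall_phi_cornerDensity_posSemidef_iff (h00 : entry T 0 0 = 0) :
    (∀ n, (phi n (cornerDensity T β n)).PosSemidef) ↔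
      ∃ α : ℝ, 0 ≤ α ∧ (T + (α : ℂ) • E 0 0).IsPositive ∧
        (Summable fun i => entry T i i) ∧ traceOp T + (α : ℂ) ≤ β := by
  constructor
  · intro hT
    have hsum := summable_entry_self_of_forall_phi_cornerDensity_posSemidef h00 hT
    have traceOp_le : traceOp T ≤ β := le_of_tendsto' (tendsto_trace_phi hsum) fun n =>
      trace_phi_le_of_phi_cornerDensity_posSemidef h00 (hT n)
    obtain ⟨α, α_nonneg, hα⟩ := RCLike.nonneg_iff_exists_ofReal.mp (sub_nonneg.mpr traceOp_le)
    replace hα : (α : ℂ) = β - traceOp T := hα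
    refine ⟨α, α_nonneg, isPositive_of_tendsto_of_phi_posSemidef ?_ hT, hsum, ?_⟩
    · rw [hα]
      exact tendsto_const_nhds.add (((tendsto_trace_phi hsum).const_sub β).smul_const (E 0 0))
    · rw [hα, add_sub_cancel]
  · rintro ⟨α, -, hT, hsum, hβ⟩ n
    refine phi_cornerDensity_posSemidef_of_isPositive hT (le_trans ?_ hβ)
    have trace_phi_le : (phi n T).trace ≤ traceOp T := by
      rw [trace_phi]
      exact hsum.sum_le_tsum _ fun i _ =>
        entry_self_nonneg_of_phi_add_smul_E_posSemidef h00 (phi_posSemidef hT i)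
    gcongr

end Functional

section TraceClass

lemma norm_inner_le_re_inner_abs {H : Type*} [NormedAddCommGroup H] [InnerProductSpace ℂ H]
    [CompleteSpace H] {T : H →L[ℂ] H} (hT : IsSelfAdjoint T) (x : H) :
    ‖⟪x, T x⟫_ℂ‖ ≤ (⟪x, CFC.abs T x⟫_ℂ).re := by
  have abs_sub_nonneg : 0 ≤ CFC.abs T - T := by
    rw [CFC.abs_sub_self T hT]
    exact nsmul_nonneg (CFC.negPart_nonneg T) 2
  have abs_add_nonneg : 0 ≤ CFC.abs T + T := by
    rw [CFC.abs_add_self T hT]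
    exact nsmul_nonneg (CFC.posPart_nonneg T) 2
  rw [ContinuousLinearMap.nonneg_iff_isPositive] at abs_sub_nonneg abs_add_nonneg
  have le_abs := abs_sub_nonneg.re_inner_nonneg_right x
  have neg_le_abs := abs_add_nonneg.re_inner_nonneg_right x
  rw [sub_apply, inner_sub_right, map_sub] at le_abs
  rw [add_apply, inner_add_right, map_add] at neg_le_abs
  simp only [RCLike.re_to_complex] at le_abs neg_le_abs
  have inner_real : ((⟪x, T x⟫_ℂ).re : ℂ) = ⟪x, T x⟫_ℂ :=
    hT.isSymmetric.coe_re_inner_self_apply x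
  rw [← inner_real, Complex.norm_real, Real.norm_eq_abs, abs_le]
  constructor <;> linarith

lemma TraceClass.summable_entry_self {T : Hs →L[ℂ] Hs} (hT : TraceClass T)
    (hsa : IsSelfAdjoint T) : Summable fun i => entry T i i :=
  .of_norm_bounded hT.2 fun i => norm_inner_le_re_inner_abs hsa (e i)

lemma isSelfAdjoint_of_isPositive_add_smul_E {T : Hs →L[ℂ] Hs} {α : ℝ}
    (hT : (T + (α : ℂ) • E 0 0).IsPositive) : IsSelfAdjoint T := by
  have smul_E_selfAdjoint : IsSelfAdjoint ((α : ℂ) • E 0 0) :=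
    .smul (Complex.conj_ofReal α) isPositive_E_zero_zero.isSelfAdjoint
  simpa using hT.isSelfAdjoint.sub smul_E_selfAdjoint

end TraceClass

theorem stmt_8_general (T₀ : Hs →L[ℂ] Hs) (h00 : entry T₀ 0 0 = 0) (β : ℂ) :
    (∀ (lam : ℂ) (K : Hs →L[ℂ] Hs), K ∈ K0 →
        (lam • (1 : Hs →L[ℂ] Hs) + K).IsPositive → 0 ≤ omegaFunctional T₀ β lam K) ↔
      ∃ α : ℝ, 0 ≤ α ∧ (T₀ + (α : ℂ) • E 0 0).IsPositive ∧
        (Summable fun i => entry T₀ i i) ∧ traceOp T₀ + (α : ℂ) ≤ β :=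
  omegaFunctional_nonneg_iff_forall_phi_cornerDensity_posSemidef.trans
    (forall_phi_cornerDensity_posSemidef_iff h00)

/-- let `T₀` be trace class with vanishing (0,0) entry and `β ∈ ℂ`. The
functional `ω(λI + K) = βλ + Σ_{(i,j)≠(0,0)} t_{ij} k_{ij}` on `S₀` is positive
(nonnegative on positive elements of `S₀`) iff there is `α ≥ 0` such that
`T₀ + α E₀₀` is a positive operator and `β ≥ tr(T₀) + α`. -/
theorem stmt_8 (T₀ : Hs →L[ℂ] Hs) (hT : TraceClass T₀) (h00 : entry T₀ 0 0 = 0) (β : ℂ) :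
    (∀ (lam : ℂ) (K : Hs →L[ℂ] Hs), K ∈ K0 →
        (lam • (1 : Hs →L[ℂ] Hs) + K).IsPositive →
        0 ≤ β * lam + ∑' p : ℕ × ℕ,
          (if p = (0, 0) then 0 else entry T₀ p.1 p.2 * entry K p.1 p.2)) ↔
      (∃ α : ℝ, 0 ≤ α ∧ (T₀ + (α : ℂ) • E 0 0).IsPositive ∧ traceOp T₀ + (α : ℂ) ≤ β) := by
  refine (stmt_8_general T₀ h00 β).trans (exists_congr fun α => ?_)
  refine and_congr_right fun _ => and_congr_right fun hpos => and_iff_right ?_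
  exact hT.summable_entry_self (isSelfAdjoint_of_isPositive_add_smul_E hpos)
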